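/- Assume hypothesis (H). Then there exist constants κ₃ > 0, κ₄ > 0 and h₀ > 0, depending only on N, a, b, c and u_b, with the following property. For every straight mesh on [a,c] and inverse mesh on [0,u_b] whose maximal step size h satisfies h ≤ h₀, and for every scheme pair (ũ, x̃) additionally satisfying the inequalities 0 < ũ(x) < u_b, ũ'(x) > 0, ũ''(x) ≥ 0 on (a,c] and c < x̃(v), x̃'(v) > 0, x̃''(v) ≤ 0 on (ũ(c), u_b] (second derivatives taken on mesh subintervals), there exists ǔ ∈ C²([a,b]) with ǔ''(x) = 𝒩(ǔ(x), x) on [a,b], ǔ(b) = u_b and ǔ'(b) = 1/x̃'(u_b), such that ǔ is strictly increasing, its image contains [ũ(c), u_b], and, writing x̌ = ǔ⁻¹ for the inverse function of ǔ, one has max_{x ∈ [a,c]} max(|ũ(x) − ǔ(x)|, |ũ'(x) − ǔ'(x)|) ≤ κ₃·h² and max_{v ∈ [ũ(c), u_b]} max(|x̃(v) − x̌(v)|, |x̃'(v) − x̌'(v)|) ≤ κ₄·h². -/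

import Mathlib

open Set Filter

noncomputable section

/-- Partial derivative of a two-argument function with respect to its first argument. -/
def pd1 (f : ℝ → ℝ → ℝ) (u x : ℝ) : ℝ := deriv (fun t => f t x) u

/-- Partial derivative of a two-argument function with respect to its second argument. -/
def pd2 (f : ℝ → ℝ → ℝ) (u x : ℝ) : ℝ := deriv (fun s => f u s) x

/-- The nonlinearity `𝒩(u,x) = N(u,x)·u`. -/
def Ncal (N : ℝ → ℝ → ℝ) (u x : ℝ) : ℝ := N u x * u

/-- `u` is twice continuously differentiable on `s`, with first derivative `u'`
and second derivative `u''` (derivatives within `s`). -/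
def IsC2On (u u' u'' : ℝ → ℝ) (s : Set ℝ) : Prop :=
  (∀ x ∈ s, HasDerivWithinAt u (u' x) s x) ∧
  (∀ x ∈ s, HasDerivWithinAt u' (u'' x) s x) ∧
  ContinuousOn u'' s

/-- The straight boundary value problem: `u ∈ C²([a,b])`, `u'' = 𝒩(u(x),x)` on `[a,b]`,
`u(a) = 0`, `u(b) = ub`. -/
def IsStraightBVP (N : ℝ → ℝ → ℝ) (a b ub : ℝ) (u u' u'' : ℝ → ℝ) : Prop :=
  IsC2On u u' u'' (Icc a b) ∧
  (∀ x ∈ Icc a b, u'' x = Ncal N (u x) x) ∧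
  u a = 0 ∧ u b = ub

/-- Hypothesis (H): `N`, `∂N/∂x`, `∂N/∂u`, `∂²N/∂x∂u`, `∂²N/∂u²` are all
nonnegative for `u ≥ 0` and `x ∈ [a,b]`. -/
def HypH (N : ℝ → ℝ → ℝ) (a b : ℝ) : Prop :=
  ∀ u : ℝ, 0 ≤ u → ∀ x ∈ Icc a b,
    0 ≤ N u x ∧ 0 ≤ pd2 N u x ∧ 0 ≤ pd1 N u x ∧
    0 ≤ pd2 (pd1 N) u x ∧ 0 ≤ pd1 (pd1 N) u x

/-- A mesh: finitely many strictly increasing points `pt 0 < pt 1 < ⋯ < pt n`. -/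
structure Mesh where
  n : ℕ
  pt : ℕ → ℝ
  npos : 0 < n
  mono : ∀ i < n, pt i < pt (i + 1)

/-- The coefficient `α_i(p,q,x)` of the straight discretized equation,
where `xi` is the mesh point `x_i`. -/
def alphaC (N : ℝ → ℝ → ℝ) (xi p q x : ℝ) : ℝ :=
  (pd1 N q xi * p + pd2 N q xi) * (x - xi) + N q xi

/-- The coefficient `β_i(p,q,v)` of the inverse discretized equation,
where `ui` is the (shifted) mesh point `ū_i`. -/
def betaC (N : ℝ → ℝ → ℝ) (ui p q v : ℝ) : ℝ :=
  -(pd1 (Ncal N) ui q + pd2 (Ncal N) ui q * p) * (v - ui) - Ncal N ui q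

/-- Shifted mesh knots `ū_i = max(u_i, s)`. -/
def ubar (m : Mesh) (s : ℝ) (i : ℕ) : ℝ := max (m.pt i) s

/-- A straight scheme solution on `[a,c]` with respect to the mesh `m`:
`ũ ∈ C¹([a,c])` and on each mesh subinterval `[x_i, x_{i+1}]` the second
derivative of `ũ` equals `α_i(ũ'(x_i), ũ(x_i), x)·ũ(x)`. -/
def IsStraightSol (N : ℝ → ℝ → ℝ) (a c : ℝ) (m : Mesh) (u u' : ℝ → ℝ) : Prop :=
  (∀ x ∈ Icc a c, HasDerivWithinAt u (u' x) (Icc a c) x) ∧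
  ContinuousOn u' (Icc a c) ∧
  ∀ i < m.n, ∀ x ∈ Icc (m.pt i) (m.pt (i + 1)),
    HasDerivWithinAt u'
      (alphaC N (m.pt i) (u' (m.pt i)) (u (m.pt i)) x * u x)
      (Icc (m.pt i) (m.pt (i + 1))) x

/-- An inverse scheme solution on `[s, ub]` with respect to the mesh `m` (shifted by `s`):
`x̃ ∈ C¹([s,ub])` and on each subinterval `[ū_i, ū_{i+1}]` the second derivative of `x̃`
equals `β_i(x̃'(ū_i), x̃(ū_i), v)·(x̃'(v))³`. -/
def IsInvSol (N : ℝ → ℝ → ℝ) (ub : ℝ) (m : Mesh) (s : ℝ) (X X' : ℝ → ℝ) : Prop :=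
  (∀ v ∈ Icc s ub, HasDerivWithinAt X (X' v) (Icc s ub) v) ∧
  ContinuousOn X' (Icc s ub) ∧
  ∀ i < m.n, ∀ v ∈ Icc (ubar m s i) (ubar m s (i + 1)),
    HasDerivWithinAt X'
      (betaC N (ubar m s i) (X' (ubar m s i)) (X (ubar m s i)) v * (X' v) ^ 3)
      (Icc (ubar m s i) (ubar m s (i + 1))) v

/-- A scheme pair `(ũ, x̃)`. -/
def IsSchemePair (N : ℝ → ℝ → ℝ) (a b c ub : ℝ) (ms mi : Mesh)
    (u u' X X' : ℝ → ℝ) : Prop :=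
  IsStraightSol N a c ms u u' ∧ u a = 0 ∧ 0 < u c ∧ u c < ub ∧ u' c ≠ 0 ∧
  IsInvSol N ub mi (u c) X X' ∧ X ub = b ∧ X (u c) = c ∧ X' (u c) = 1 / u' c

/-- A scheme pair additionally satisfying the sign inequalities
`0 < ũ < u_b`, `ũ' > 0`, `ũ'' ≥ 0` on `(a,c]`, and `c < x̃`, `x̃' > 0`, `x̃'' ≤ 0`
on `(ũ(c), u_b]` (second derivatives taken on the mesh subintervals). -/
def GoodPair (N : ℝ → ℝ → ℝ) (a b c ub : ℝ) (ms mi : Mesh)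
    (u u' X X' : ℝ → ℝ) : Prop :=
  IsSchemePair N a b c ub ms mi u u' X X' ∧
  (∀ x ∈ Ioc a c, 0 < u x ∧ u x < ub ∧ 0 < u' x) ∧
  (∀ i < ms.n, ∀ x ∈ Icc (ms.pt i) (ms.pt (i + 1)), x ∈ Ioc a c →
    0 ≤ alphaC N (ms.pt i) (u' (ms.pt i)) (u (ms.pt i)) x * u x) ∧
  (∀ v ∈ Ioc (u c) ub, c < X v ∧ 0 < X' v) ∧
  (∀ i < mi.n, ∀ v ∈ Icc (ubar mi (u c) i) (ubar mi (u c) (i + 1)), v ∈ Ioc (u c) ub →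
    betaC N (ubar mi (u c) i) (X' (ubar mi (u c) i)) (X (ubar mi (u c) i)) v * (X' v) ^ 3 ≤ 0)

/-- All steps of the straight mesh `ms` and of the (shifted) inverse mesh `mi`
are of size at most `h`. -/
def StepLe (ms mi : Mesh) (s h : ℝ) : Prop :=
  (∀ i < ms.n, ms.pt (i + 1) - ms.pt i ≤ h) ∧
  (∀ i < mi.n, ubar mi s (i + 1) - ubar mi s i ≤ h)

section OneSided

/-- A continuous function on `[p, q]` whose left derivatives are nonnegative is monotone. -/
lemma monotoneOn_of_left_deriv_nonneg {f : ℝ → ℝ} {p q : ℝ}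
    (hf : ContinuousOn f (Icc p q))
    (hd : ∀ x ∈ Ioc p q, ∃ d, 0 ≤ d ∧ HasDerivWithinAt f d (Iic x) x) :
    MonotoneOn f (Icc p q) := by
  intro x hx z hz hxz
  choose! d hd0 hd using hd
  have hneg : ContinuousOn (fun t : ℝ => f (-t)) (Icc (-z) (-x)) :=
    hf.comp continuous_neg.continuousOn fun t ht =>
      ⟨by linarith [ht.2, hx.1], by linarith [ht.1, hz.2]⟩
  have hder : ∀ t ∈ Ico (-z) (-x),
      HasDerivWithinAt (fun t : ℝ => f (-t)) (-d (-t)) (Ici t) t := by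
    intro t ht
    have h1 := hd (-t) ⟨by linarith [ht.2, hx.1], by linarith [ht.1, hz.2]⟩
    have h2 : HasDerivWithinAt (fun t : ℝ => -t) (-1) (Ici t) t :=
      (hasDerivAt_neg t).hasDerivWithinAt
    have h3 := HasDerivWithinAt.comp t h1 h2 (fun w hw => by simpa using hw)
    simpa [Function.comp_def] using h3
  have := image_le_of_deriv_right_le_deriv_boundary (B := fun _ => f z) (B' := fun _ => 0)
    hneg hder (by simp) continuousOn_const (fun t _ => hasDerivWithinAt_const _ _ _)
    (fun t ht => by
      have := hd0 (-t) ⟨by linarith [ht.2, hx.1], by linarith [ht.1, hz.2]⟩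
      linarith) (x := -x) ⟨by linarith, le_rfl⟩
  simpa using this

lemma HasDerivWithinAt.Iic_of_Icc {E : Type*} [NormedAddCommGroup E] [NormedSpace ℝ E]
    {f : ℝ → E} {d : E} {p q x : ℝ}
    (h : HasDerivWithinAt f d (Icc p q) x) (hpx : p < x) (hxq : x ≤ q) :
    HasDerivWithinAt f d (Iic x) x :=
  h.mono_of_mem_nhdsWithin
    (Filter.mem_of_superset (Icc_mem_nhdsLE hpx) (Icc_subset_Icc_right hxq))

/-- A lower bound for the left derivatives bounds the increments from below. -/
lemma mul_sub_le_of_left_deriv_ge {f : ℝ → ℝ} {p q m : ℝ}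
    (hf : ContinuousOn f (Icc p q))
    (hd : ∀ x ∈ Ioc p q, ∃ d, m ≤ d ∧ HasDerivWithinAt f d (Iic x) x)
    {x z : ℝ} (hx : x ∈ Icc p q) (hz : z ∈ Icc p q) (hxz : x ≤ z) :
    m * (z - x) ≤ f z - f x := by
  have hmono : MonotoneOn (fun t => f t - m * t) (Icc p q) := by
    refine monotoneOn_of_left_deriv_nonneg (by fun_prop) fun t ht => ?_
    obtain ⟨d, hmd, hdt⟩ := hd t ht
    refine ⟨d - m, by linarith, ?_⟩
    simpa using hdt.fun_sub ((hasDerivWithinAt_id t (Iic t)).const_mul m)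
  have := hmono hx hz hxz
  simp only at this
  linarith

/-- An upper bound for the left derivatives bounds the increments from above. -/
lemma sub_le_mul_of_left_deriv_le {f : ℝ → ℝ} {p q m : ℝ}
    (hf : ContinuousOn f (Icc p q))
    (hd : ∀ x ∈ Ioc p q, ∃ d, d ≤ m ∧ HasDerivWithinAt f d (Iic x) x)
    {x z : ℝ} (hx : x ∈ Icc p q) (hz : z ∈ Icc p q) (hxz : x ≤ z) :
    f z - f x ≤ m * (z - x) := by
  have := mul_sub_le_of_left_deriv_ge (f := fun t => -f t) (m := -m) hf.neg
    (fun t ht => by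
      obtain ⟨d, hmd, hdt⟩ := hd t ht
      exact ⟨-d, by linarith, hdt.neg⟩) hx hz hxz
  linarith

/-- Scalar Grönwall inequality for left derivatives. -/
lemma le_mul_exp_of_left_deriv_le {f : ℝ → ℝ} {p q L : ℝ}
    (hf : ContinuousOn f (Icc p q))
    (hd : ∀ x ∈ Ioc p q, ∃ d, d ≤ L * f x ∧ HasDerivWithinAt f d (Iic x) x)
    {x z : ℝ} (hx : x ∈ Icc p q) (hz : z ∈ Icc p q) (hxz : x ≤ z) :
    f z ≤ f x * Real.exp (L * (z - x)) := by
  have hmono : MonotoneOn (fun t => -(f t * Real.exp (-L * t))) (Icc p q) := by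
    refine monotoneOn_of_left_deriv_nonneg (by fun_prop) fun t ht => ?_
    obtain ⟨d, hmd, hdt⟩ := hd t ht
    have he : HasDerivAt (fun t : ℝ => Real.exp (-L * t)) (Real.exp (-L * t) * -L) t := by
      simpa using ((hasDerivAt_id t).const_mul (-L)).exp
    refine ⟨_, ?_, (hdt.mul he.hasDerivWithinAt).neg⟩
    nlinarith [Real.exp_pos (-L * t)]
  have h := hmono hx hz hxz
  simp only [neg_le_neg_iff] at h
  have h1 : f z = f z * Real.exp (-L * z) * Real.exp (L * z) := by
    rw [mul_assoc, ← Real.exp_add]; simp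
  have h2 : f x * Real.exp (L * (z - x)) = f x * Real.exp (-L * x) * Real.exp (L * z) := by
    rw [mul_assoc, ← Real.exp_add]; ring_nf
  rw [h1, h2]
  gcongr

end OneSided

section InverseFunction

/-- A differentiable function on `[p, q]` with derivative bounded below by `m > 0` has a
differentiable inverse on `[f p, f q]`. -/
lemma exists_hasDerivWithinAt_inverse {f f' : ℝ → ℝ} {p q m : ℝ} (hpq : p ≤ q) (hm : 0 < m)
    (hf : ∀ x ∈ Icc p q, HasDerivWithinAt f (f' x) (Icc p q) x)
    (hf' : ∀ x ∈ Icc p q, m ≤ f' x) :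
    StrictMonoOn f (Icc p q) ∧ ∃ g : ℝ → ℝ, (∀ x ∈ Icc p q, g (f x) = x) ∧
      (∀ v ∈ Icc (f p) (f q), g v ∈ Icc p q ∧ f (g v) = v) ∧
      MonotoneOn g (Icc (f p) (f q)) ∧
      ∀ v ∈ Icc (f p) (f q), HasDerivWithinAt g (f' (g v))⁻¹ (Icc (f p) (f q)) v := by
  have hcont : ContinuousOn f (Icc p q) := fun x hx => (hf x hx).continuousWithinAt
  have hinc : ∀ x ∈ Icc p q, ∀ z ∈ Icc p q, x ≤ z → m * (z - x) ≤ f z - f x :=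
    fun x hx z hz => mul_sub_le_of_left_deriv_ge hcont (fun t ht =>
      ⟨f' t, hf' t (Ioc_subset_Icc_self ht),
        (hf t (Ioc_subset_Icc_self ht)).Iic_of_Icc ht.1 ht.2⟩) hx hz
  have hstrict : StrictMonoOn f (Icc p q) := fun x hx z hz hxz => by
    have := hinc x hx z hz hxz.le
    nlinarith
  set g := Function.invFunOn f (Icc p q) with hg
  have hgf : ∀ x ∈ Icc p q, g (f x) = x := hstrict.injOn.leftInvOn_invFunOn
  have hgv : ∀ v ∈ Icc (f p) (f q), g v ∈ Icc p q ∧ f (g v) = v := by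
    intro v hv
    have hv' := intermediate_value_Icc hpq hcont hv
    exact ⟨Function.invFunOn_mem hv', Function.invFunOn_eq hv'⟩
  have hmono : MonotoneOn g (Icc (f p) (f q)) := by
    intro v hv w hw hvw
    obtain ⟨hv1, hv2⟩ := hgv v hv
    obtain ⟨hw1, hw2⟩ := hgv w hw
    rw [← hstrict.le_iff_le hv1 hw1, hv2, hw2]
    exact hvw
  have hlip : ∀ v ∈ Icc (f p) (f q), ∀ w ∈ Icc (f p) (f q), v ≤ w →
      g w - g v ≤ m⁻¹ * (w - v) := by
    intro v hv w hw hvw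
    have := hinc _ (hgv v hv).1 _ (hgv w hw).1 (hmono hv hw hvw)
    rw [(hgv v hv).2, (hgv w hw).2] at this
    rw [inv_mul_eq_div, le_div_iff₀ hm]
    linarith
  have hgc : ContinuousOn g (Icc (f p) (f q)) := by
    have : LipschitzOnWith ⟨m⁻¹, (inv_pos.2 hm).le⟩ g (Icc (f p) (f q)) := by
      refine LipschitzOnWith.of_dist_le_mul fun v hv w hw => ?_
      rw [Real.dist_eq, Real.dist_eq]
      change _ ≤ m⁻¹ * _
      rcases le_total v w with h | h
      · rw [abs_sub_comm, abs_of_nonneg (sub_nonneg.2 (hmono hv hw h)), abs_sub_comm,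
          abs_of_nonneg (sub_nonneg.2 h)]
        exact hlip v hv w hw h
      · rw [abs_of_nonneg (sub_nonneg.2 (hmono hw hv h)), abs_of_nonneg (sub_nonneg.2 h)]
        exact hlip w hw v hv h
    exact this.continuousOn
  refine ⟨hstrict, g, hgf, hgv, hmono, fun v hv => ?_⟩
  have hne : f' (g v) ≠ 0 := (hm.trans_le (hf' _ (hgv v hv).1)).ne'
  have htend : Tendsto g (nhdsWithin v (Icc (f p) (f q))) (nhdsWithin (g v) (Icc p q)) :=
    tendsto_nhdsWithin_iff.2 ⟨hgc v hv,
      eventually_nhdsWithin_of_forall fun w hw => (hgv w hw).1⟩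
  have h1 := (hf _ (hgv v hv).1).hasFDerivWithinAt.of_comp_of_leftInverse htend
    (hasFDerivWithinAt_id v _)
    (eventually_nhdsWithin_of_forall fun w hw => (hgv w hw).2)
    (f'symm := .toSpanSingleton ℝ (f' (g v))⁻¹) (fun _ => by simp [hne]) hv
  simpa using h1.hasDerivWithinAt

end InverseFunction

section Taylor

/-- Quantitative first-order Taylor expansion of a `C²` function along a curve `t ↦ (y t, t)`,
with a constant depending only on bounds for the curve. -/
lemma exists_taylor_bound_along_graph {F : ℝ × ℝ → ℝ} (hF : ContDiff ℝ 2 F) (a b R M Λ : ℝ)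
    (hM : 0 ≤ M) (hΛ : 0 ≤ Λ) :
    ∃ C : ℝ, 0 ≤ C ∧ ∀ (y y' : ℝ → ℝ) (p q : ℝ), a ≤ p → p ≤ q → q ≤ b →
      (∀ t ∈ Icc p q, HasDerivWithinAt y (y' t) (Icc p q) t) →
      (∀ t ∈ Icc p q, |y t| ≤ R) → (∀ t ∈ Icc p q, |y' t| ≤ M) →
      (∀ t ∈ Icc p q, |y' t - y' p| ≤ Λ * (t - p)) →
      |F (y q, q) - F (y p, p)
        - (fderiv ℝ F (y p, p) (1, 0) * y' p + fderiv ℝ F (y p, p) (0, 1)) * (q - p)|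
        ≤ C * (q - p) ^ 2 := by
  set B : Set (ℝ × ℝ) := Icc (-R) R ×ˢ Icc a b with hB
  have hBc : IsCompact B := isCompact_Icc.prod isCompact_Icc
  have hBconv : Convex ℝ B := (convex_Icc _ _).prod (convex_Icc _ _)
  have hF' : ContDiff ℝ 1 (fderiv ℝ F) := hF.fderiv_right (by norm_num)
  obtain ⟨L, hL⟩ := hF'.contDiffOn.exists_lipschitzOnWith (by norm_num) hBconv hBc
  obtain ⟨K, hK⟩ := hBc.exists_bound_of_continuousOn hF'.continuous.continuousOn
  refine ⟨L * (M + 1) * (M + 1) + |K| * Λ, by positivity, ?_⟩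
  intro y y' p q hap hpq hqb hy hyR hyM hyL
  have hp : p ∈ Icc p q := ⟨le_rfl, hpq⟩
  have hmem : ∀ t ∈ Icc p q, (y t, t) ∈ B := fun t ht =>
    ⟨abs_le.1 (hyR t ht), ⟨hap.trans ht.1, ht.2.trans hqb⟩⟩
  set D : ℝ := fderiv ℝ F (y p, p) (y' p, 1) with hD
  have hDeq : D = fderiv ℝ F (y p, p) (1, 0) * y' p + fderiv ℝ F (y p, p) (0, 1) := by
    have : ((y' p, 1) : ℝ × ℝ) = y' p • ((1, 0) : ℝ × ℝ) + (0, 1) := by simp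
    rw [hD, this, map_add, map_smul, smul_eq_mul, mul_comm]
  have hder : ∀ t ∈ Icc p q, HasDerivWithinAt (fun t => F (y t, t) - D * t)
      (fderiv ℝ F (y t, t) (y' t, 1) - D) (Icc p q) t := by
    intro t ht
    have h1 : HasDerivWithinAt (fun t => (y t, t)) (y' t, (1 : ℝ)) (Icc p q) t :=
      (hy t ht).prodMk (hasDerivWithinAt_id t _)
    have h0 : HasFDerivAt F (fderiv ℝ F (y t, t)) ((fun t => (y t, t)) t) :=
      ((hF.differentiable (by norm_num)) (y t, t)).hasFDerivAt
    have h2 := HasFDerivAt.comp_hasDerivWithinAt (f := fun t => (y t, t)) t h0 h1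
    simpa [Function.comp_def] using h2.fun_sub ((hasDerivWithinAt_id t (Icc p q)).const_mul D)
  have hyLip : ∀ t ∈ Icc p q, |y t - y p| ≤ M * (t - p) := by
    intro t ht
    exact norm_image_sub_le_of_norm_deriv_le_segment' hy
      (fun s hs => hyM s (Ico_subset_Icc_self hs)) t ht
  have hbound : ∀ t ∈ Ico p q, ‖fderiv ℝ F (y t, t) (y' t, 1) - D‖ ≤
      (L * (M + 1) * (M + 1) + |K| * Λ) * (q - p) := by
    intro t ht'
    have ht := Ico_subset_Icc_self ht'
    have htp : 0 ≤ t - p := by linarith [ht.1]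
    have e : fderiv ℝ F (y t, t) (y' t, 1) - D =
        (fderiv ℝ F (y t, t) - fderiv ℝ F (y p, p)) (y' t, 1)
          + fderiv ℝ F (y p, p) (y' t - y' p, 0) := by
      have : ((y' t - y' p, 0) : ℝ × ℝ) = (y' t, 1) - (y' p, 1) := by simp
      rw [this, map_sub, hD]; simp
    have n1 : ‖fderiv ℝ F (y t, t) - fderiv ℝ F (y p, p)‖ ≤ L * ((M + 1) * (t - p)) := by
      rw [← dist_eq_norm]
      refine (hL.dist_le_mul _ (hmem t ht) _ (hmem p hp)).trans ?_
      gcongr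
      rw [Prod.dist_eq]
      refine max_le ?_ ?_
      · rw [Real.dist_eq]; nlinarith [hyLip t ht]
      · rw [Real.dist_eq, abs_of_nonneg htp]; nlinarith
    have n2 : ‖((y' t, 1) : ℝ × ℝ)‖ ≤ M + 1 := by
      rw [Prod.norm_def]
      exact max_le (by simpa using (hyM t ht).trans (by linarith)) (by simpa using hM)
    have n3 : ‖((y' t - y' p, 0) : ℝ × ℝ)‖ ≤ Λ * (t - p) := by
      rw [Prod.norm_def]
      exact max_le (by simpa using hyL t ht) (by simpa using mul_nonneg hΛ htp)
    have n4 : ‖fderiv ℝ F (y p, p)‖ ≤ |K| := (hK _ (hmem p hp)).trans (le_abs_self K)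
    rw [e]
    calc _ ≤ ‖fderiv ℝ F (y t, t) - fderiv ℝ F (y p, p)‖ * ‖((y' t, 1) : ℝ × ℝ)‖
          + ‖fderiv ℝ F (y p, p)‖ * ‖((y' t - y' p, 0) : ℝ × ℝ)‖ :=
          (norm_add_le _ _).trans (add_le_add (ContinuousLinearMap.le_opNorm _ _)
            (ContinuousLinearMap.le_opNorm _ _))
      _ ≤ L * ((M + 1) * (t - p)) * (M + 1) + |K| * (Λ * (t - p)) := by gcongr
      _ = (L * (M + 1) * (M + 1) + |K| * Λ) * (t - p) := by ring
      _ ≤ _ := by gcongr; exact ht.2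
  have := norm_image_sub_le_of_norm_deriv_le_segment' hder hbound q ⟨hpq, le_rfl⟩
  rw [Real.norm_eq_abs] at this
  rw [← hDeq]
  convert this using 1
  · congr 1; ring
  · ring

end Taylor

section Shooting

/-- Truncation of a real number to `[-R, R]`. -/
def truncate (R z : ℝ) : ℝ := max (-R) (min R z)

lemma truncate_mem {R : ℝ} (hR : 0 ≤ R) (z : ℝ) : truncate R z ∈ Icc (-R) R :=
  ⟨le_max_left _ _, max_le (by linarith) (min_le_left _ _)⟩

lemma truncate_eq {R z : ℝ} (hz : |z| ≤ R) : truncate R z = z := by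
  rw [truncate, min_eq_right (abs_le.1 hz).2, max_eq_right (abs_le.1 hz).1]

lemma dist_truncate_le (R z w : ℝ) : dist (truncate R z) (truncate R w) ≤ dist z w := by
  rw [Real.dist_eq, Real.dist_eq]
  calc _ ≤ |min R z - min R w| := by
        simpa [truncate, max_comm] using abs_max_sub_max_le_abs (min R z) (min R w) (-R)
    _ ≤ _ := by
      simpa using abs_min_sub_min_le_max R z R w

/-- An approximate solution of `y'' = F(y, x)` with defect `ε` is shadowed by the exact solution
with the same data at the right endpoint, up to an error proportional to `ε`. -/
lemma exists_exact_solution_near {F : ℝ × ℝ → ℝ} (hF : ContDiff ℝ 2 F) {a b R : ℝ} (hab : a < b)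
    (hR : 0 ≤ R) :
    ∃ C : ℝ, 0 < C ∧ ∀ (y y' : ℝ → ℝ) (ε : ℝ), 0 ≤ ε →
      (∀ x ∈ Icc a b, HasDerivWithinAt y (y' x) (Icc a b) x) → ContinuousOn y' (Icc a b) →
      (∀ x ∈ Icc a b, |y x| ≤ R ∧ |y' x| ≤ R) →
      (∀ x ∈ Ioc a b, ∃ d, HasDerivWithinAt y' d (Iic x) x ∧ |d - F (y x, x)| ≤ ε) →
      C * ε ≤ 1 →
      ∃ w w' : ℝ → ℝ, w b = y b ∧ w' b = y' b ∧ ∀ x ∈ Icc a b,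
        HasDerivWithinAt w (w' x) (Icc a b) x ∧
        HasDerivWithinAt w' (F (w x, x)) (Icc a b) x ∧
        |y x - w x| ≤ C * ε ∧ |y' x - w' x| ≤ C * ε := by
  set S : ℝ := R + 1 with hS
  have hS0 : 0 ≤ S := by linarith
  set B : Set (ℝ × ℝ) := Icc (-S) S ×ˢ Icc a b with hB
  have hBc : IsCompact B := isCompact_Icc.prod isCompact_Icc
  have hBconv : Convex ℝ B := (convex_Icc _ _).prod (convex_Icc _ _)
  obtain ⟨K₀, hK₀⟩ := hF.contDiffOn.exists_lipschitzOnWith (by norm_num) hBconv hBc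
  obtain ⟨P, hP⟩ := hBc.exists_bound_of_continuousOn hF.continuous.continuousOn
  set K : NNReal := max 1 K₀ with hK
  have hK1 : (1 : ℝ) ≤ K := by exact_mod_cast le_max_left 1 K₀
  have hKK : (K₀ : ℝ) ≤ K := by exact_mod_cast le_max_right 1 K₀
  set V : ℝ → ℝ × ℝ → ℝ × ℝ := fun t z => (truncate S z.2, F (truncate S z.1, t)) with hV
  have hVlip : ∀ t ∈ Icc a b, LipschitzWith K (V t) := by
    intro t ht
    refine LipschitzWith.of_dist_le_mul fun z w => ?_
    have hz1 : dist z.1 w.1 ≤ dist z w := by rw [Prod.dist_eq]; exact le_max_left _ _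
    have hz2 : dist z.2 w.2 ≤ dist z w := by rw [Prod.dist_eq]; exact le_max_right _ _
    have hd : 0 ≤ dist z w := dist_nonneg
    rw [Prod.dist_eq (x := V t z)]
    refine max_le ?_ ?_
    · refine ((dist_truncate_le S _ _).trans hz2).trans ?_
      nlinarith
    · refine (hK₀.dist_le_mul _ ⟨truncate_mem hS0 _, ht⟩ _ ⟨truncate_mem hS0 _, ht⟩).trans ?_
      refine mul_le_mul hKK ?_ dist_nonneg K.2
      rw [Prod.dist_eq]
      simpa using (dist_truncate_le S _ _).trans hz1
  set L : NNReal := ⟨max S |P|, by positivity⟩ with hL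
  refine ⟨Real.exp (K * (b - a)), Real.exp_pos _, ?_⟩
  intro y y' ε hε hy hy'c hyR hdef hCε
  have hPL : IsPicardLindelof V (tmin := a) (tmax := b) ⟨b, hab.le, le_rfl⟩ (y b, y' b)
      (L * ⟨b - a, by linarith⟩) 0 L K := by
    refine ⟨fun t ht => (hVlip t ht).lipschitzOnWith, fun z _ => ?_, fun t ht z _ => ?_, ?_⟩
    · exact (continuous_const.prodMk
        (hF.continuous.comp (continuous_const.prodMk continuous_id))).continuousOn
    · change _ ≤ max S |P|
      rw [Prod.norm_def]
      refine max_le_max ?_ ?_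
      · exact abs_le.2 (truncate_mem hS0 z.2)
      · exact (hP _ ⟨truncate_mem hS0 _, ht⟩).trans (le_abs_self P)
    · have : 0 ≤ b - a := by linarith
      simp only [sub_self, max_eq_right this, NNReal.coe_zero, sub_zero]
      rfl
  obtain ⟨z, hzb, hz⟩ := hPL.exists_eq_forall_mem_Icc_hasDerivWithinAt₀
  have hclose : ∀ x ∈ Icc a b, dist (y x, y' x) (z x) ≤ Real.exp (K * (b - a)) * ε := by
    choose! d hd hdε using hdef
    have hneg : ∀ t ∈ Icc (-b) (-a), -t ∈ Icc a b := fun t ht =>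
      ⟨by linarith [ht.2], by linarith [ht.1]⟩
    have hneg' : ∀ t ∈ Ico (-b) (-a), -t ∈ Ioc a b := fun t ht =>
      ⟨by linarith [ht.2], by linarith [ht.1]⟩
    have hyc : ContinuousOn (fun x => (y x, y' x)) (Icc a b) :=
      ContinuousOn.prodMk (fun x hx => (hy x hx).continuousWithinAt) hy'c
    have hzc : ContinuousOn z (Icc a b) := fun x hx => (hz x hx).continuousWithinAt
    have hrev : ∀ (f : ℝ → ℝ × ℝ) (f' : ℝ × ℝ) (t : ℝ), HasDerivWithinAt f f' (Iic (-t)) (-t) →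
        HasDerivWithinAt (fun t => f (-t)) (-f') (Ici t) t := by
      intro f f' t hf
      have h2 : HasDerivWithinAt (fun t : ℝ => -t) (-1) (Ici t) t :=
        (hasDerivAt_neg t).hasDerivWithinAt
      have h3 := HasDerivWithinAt.scomp t hf h2 (fun w hw => by simpa using hw)
      simpa [Function.comp_def] using h3
    have key := dist_le_of_approx_trajectories_ODE_of_mem (v := fun t z => -V (-t) z) (K := K)
      (s := fun _ => univ) (a := -b) (b := -a) (δ := 0) (εf := ε) (εg := 0)
      (f := fun t => (y (-t), y' (-t))) (g := fun t => z (-t))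
      (f' := fun t => -(y' (-t), d (-t))) (g' := fun t => -V (-t) (z (-t)))
      (fun t ht => (LipschitzWith.lipschitzOnWith
        (hVlip (-t) (hneg t (Ico_subset_Icc_self ht)))).neg)
      (hyc.comp continuous_neg.continuousOn hneg)
      (fun t ht => hrev (fun x => (y x, y' x)) _ t
        (((hy _ (Ioc_subset_Icc_self (hneg' t ht))).Iic_of_Icc (hneg' t ht).1
          (hneg' t ht).2).prodMk (hd _ (hneg' t ht))))
      (fun t ht => by
        have hm := hneg' t ht
        have hb := hyR _ (Ioc_subset_Icc_self hm)
        rw [dist_neg_neg, Prod.dist_eq]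
        simp only [hV]
        rw [truncate_eq (by linarith [hb.1]), truncate_eq (by linarith [hb.2]), dist_self,
          Real.dist_eq]
        exact max_le hε (hdε _ hm))
      (fun _ _ => mem_univ _)
      (hzc.comp continuous_neg.continuousOn hneg)
      (fun t ht => hrev z _ t ((hz _ (Ioc_subset_Icc_self (hneg' t ht))).Iic_of_Icc
        (hneg' t ht).1 (hneg' t ht).2))
      (fun t ht => by rw [dist_self])
      (fun _ _ => mem_univ _)
      (by simp only [neg_neg]; rw [← hzb, dist_self])
    intro x hx
    have := key (-x) ⟨by linarith [hx.2], by linarith [hx.1]⟩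
    simp only [neg_neg, add_zero] at this
    refine this.trans ?_
    rw [gronwallBound_of_K_ne_0 (by positivity)]
    have h1 : Real.exp (K * (-x - -b)) ≤ Real.exp (K * (b - a)) :=
      Real.exp_le_exp.2 (mul_le_mul_of_nonneg_left (by linarith [hx.1]) K.2)
    have h2 : ε / K ≤ ε := div_le_self hε hK1
    have h3 : 0 ≤ ε / K := by positivity
    have h4 := Real.exp_pos (K * (-x - -b))
    simp only [zero_mul, zero_add]
    nlinarith [Real.exp_pos (K * (b - a))]
  have hfst : ∀ x ∈ Icc a b, |y x - (z x).1| ≤ Real.exp (K * (b - a)) * ε := fun x hx =>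
    ((le_max_left _ _).trans_eq (Prod.dist_eq ..).symm).trans (hclose x hx)
  have hsnd : ∀ x ∈ Icc a b, |y' x - (z x).2| ≤ Real.exp (K * (b - a)) * ε := fun x hx =>
    ((le_max_right _ _).trans_eq (Prod.dist_eq ..).symm).trans (hclose x hx)
  refine ⟨fun x => (z x).1, fun x => (z x).2, by simp [hzb], by simp [hzb], fun x hx => ?_⟩
  have hb := hyR x hx
  have t1 : truncate S (z x).1 = (z x).1 := truncate_eq (by
    have h1 := abs_le.1 (hfst x hx)
    have h2 := abs_le.1 hb.1
    exact abs_le.2 ⟨by linarith [h1.2, h2.1], by linarith [h1.1, h2.2]⟩)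
  have t2 : truncate S (z x).2 = (z x).2 := truncate_eq (by
    have h1 := abs_le.1 (hsnd x hx)
    have h2 := abs_le.1 hb.2
    exact abs_le.2 ⟨by linarith [h1.2, h2.1], by linarith [h1.1, h2.2]⟩)
  have hzx := hz x hx
  simp only [hV, t1, t2] at hzx
  refine ⟨?_, ?_, hfst x hx, hsnd x hx⟩
  · exact (ContinuousLinearMap.fst ℝ ℝ ℝ).hasFDerivAt.comp_hasDerivWithinAt x hzx
  · exact (ContinuousLinearMap.snd ℝ ℝ ℝ).hasFDerivAt.comp_hasDerivWithinAt x hzx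

end Shooting

section PartialDerivatives

lemma pd1_eq_fderiv {f : ℝ → ℝ → ℝ} (hf : ContDiff ℝ 2 (Function.uncurry f)) (u x : ℝ) :
    pd1 f u x = fderiv ℝ (Function.uncurry f) (u, x) (1, 0) := by
  have h0 : HasFDerivAt (Function.uncurry f) (fderiv ℝ (Function.uncurry f) (u, x)) (u, x) :=
    (hf.differentiable (by norm_num) _).hasFDerivAt
  have h1 : HasDerivAt (fun t : ℝ => (t, x)) (1, 0) u :=
    (hasDerivAt_id u).prodMk (hasDerivAt_const u x)
  exact (HasFDerivAt.comp_hasDerivAt (f := fun t : ℝ => (t, x)) u h0 h1).deriv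

lemma pd2_eq_fderiv {f : ℝ → ℝ → ℝ} (hf : ContDiff ℝ 2 (Function.uncurry f)) (u x : ℝ) :
    pd2 f u x = fderiv ℝ (Function.uncurry f) (u, x) (0, 1) := by
  have h0 : HasFDerivAt (Function.uncurry f) (fderiv ℝ (Function.uncurry f) (u, x)) (u, x) :=
    (hf.differentiable (by norm_num) _).hasFDerivAt
  have h1 : HasDerivAt (fun t : ℝ => (u, t)) (0, 1) x :=
    (hasDerivAt_const x u).prodMk (hasDerivAt_id x)
  exact (HasFDerivAt.comp_hasDerivAt (f := fun t : ℝ => (u, t)) x h0 h1).deriv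

lemma pd1_Ncal {N : ℝ → ℝ → ℝ} (hN : ContDiff ℝ 2 (Function.uncurry N)) (u x : ℝ) :
    pd1 (Ncal N) u x = pd1 N u x * u + N u x := by
  have hd : DifferentiableAt ℝ (fun t => N t x) u :=
    (hN.comp (contDiff_id.prodMk contDiff_const)).differentiable (by norm_num) u
  simpa [pd1, Ncal] using (hd.hasDerivAt.fun_mul (hasDerivAt_id u)).deriv

lemma pd2_Ncal (N : ℝ → ℝ → ℝ) (u x : ℝ) : pd2 (Ncal N) u x = pd2 N u x * u := by
  simp [pd2, Ncal]

lemma contDiff_Ncal {N : ℝ → ℝ → ℝ} (hN : ContDiff ℝ 2 (Function.uncurry N)) :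
    ContDiff ℝ 2 (Function.uncurry (Ncal N)) :=
  hN.mul contDiff_fst

/-- Uniform bounds for a `C²` function and its first partial derivatives on a rectangle. -/
lemma exists_bound_pd {f : ℝ → ℝ → ℝ} (hf : ContDiff ℝ 2 (Function.uncurry f)) (p q a b : ℝ) :
    ∃ K : ℝ, 0 < K ∧ ∀ u ∈ Icc p q, ∀ x ∈ Icc a b,
      |f u x| ≤ K ∧ |pd1 f u x| ≤ K ∧ |pd2 f u x| ≤ K := by
  have hBc : IsCompact (Icc p q ×ˢ Icc a b) := isCompact_Icc.prod isCompact_Icc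
  have hf' : ContDiff ℝ 1 (fderiv ℝ (Function.uncurry f)) := hf.fderiv_right (by norm_num)
  obtain ⟨K, hK⟩ := hBc.exists_bound_of_continuousOn hf.continuous.continuousOn
  obtain ⟨L, hL⟩ := hBc.exists_bound_of_continuousOn hf'.continuous.continuousOn
  refine ⟨|K| + |L| + 1, by positivity, fun u hu x hx => ?_⟩
  have h1 : |f u x| ≤ K := hK (u, x) ⟨hu, hx⟩
  have h2 := hL (u, x) ⟨hu, hx⟩
  have h3 := (fderiv ℝ (Function.uncurry f) (u, x)).le_opNorm (1, 0)
  have h4 := (fderiv ℝ (Function.uncurry f) (u, x)).le_opNorm (0, 1)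
  simp only [Prod.norm_def, norm_one, norm_zero, zero_le_one, sup_of_le_left, sup_of_le_right,
    mul_one, ← pd1_eq_fderiv hf, ← pd2_eq_fderiv hf, Real.norm_eq_abs (pd1 f u x),
    Real.norm_eq_abs (pd2 f u x)] at h3 h4
  have := le_abs_self K
  have := le_abs_self L
  have := abs_nonneg K
  have := abs_nonneg L
  exact ⟨by linarith, by linarith, by linarith⟩

end PartialDerivatives

/-- The function `y` on `[a, b]` obtained by gluing `ũ` on `[a, c]` with the inverse of `x̃` on
`[c, b]`: it is `C¹`, increasing and convex, and the left derivative of `y'` is the one prescribed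
by the straight scheme on `(a, c]` and by the inverse scheme on `(c, b]`. -/
structure IsGluedScheme (N : ℝ → ℝ → ℝ) (a b c ub h : ℝ) (y y' : ℝ → ℝ) : Prop where
  hasDeriv : ∀ x ∈ Icc a b, HasDerivWithinAt y (y' x) (Icc a b) x
  cont : ContinuousOn y' (Icc a b)
  left_val : y a = 0
  right_val : y b = ub
  pos : ∀ x ∈ Ioc a b, 0 < y' x
  left_deriv : ∀ x ∈ Ioc a b, ∃ p ∈ Ico a x, ∃ d, HasDerivWithinAt y' d (Iic x) x ∧ 0 ≤ d ∧
    ((x ≤ c ∧ x - p ≤ h ∧ d = alphaC N p (y' p) (y p) x * y x) ∨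
      (c ≤ p ∧ y x - y p ≤ h ∧ d = -betaC N (y p) (1 / y' p) p (y x)))

namespace IsGluedScheme

variable {N : ℝ → ℝ → ℝ} {a b c ub h : ℝ} {y y' : ℝ → ℝ}

lemma monotone_deriv (H : IsGluedScheme N a b c ub h y y') : MonotoneOn y' (Icc a b) :=
  monotoneOn_of_left_deriv_nonneg H.cont fun x hx => by
    obtain ⟨p, -, d, hd, hd0, -⟩ := H.left_deriv x hx
    exact ⟨d, hd0, hd⟩

lemma continuousOn (H : IsGluedScheme N a b c ub h y y') : ContinuousOn y (Icc a b) :=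
  fun x hx => (H.hasDeriv x hx).continuousWithinAt

lemma deriv_nonneg (H : IsGluedScheme N a b c ub h y y') (hab : a < b) :
    ∀ x ∈ Icc a b, 0 ≤ y' x := by
  have hcl : closure (Ioo a b) = Icc a b := closure_Ioo hab.ne
  intro x hx
  rw [← hcl] at hx
  refine le_on_closure (f := fun _ => 0) (g := y') (fun z hz => ?_) continuousOn_const ?_ hx
  · exact (H.pos z ⟨hz.1, hz.2.le⟩).le
  · rw [hcl]; exact H.cont

lemma le_increment (H : IsGluedScheme N a b c ub h y y') {x z : ℝ} (hax : a ≤ x) (hxz : x ≤ z)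
    (hzb : z ≤ b) : y' x * (z - x) ≤ y z - y x :=
  mul_sub_le_of_left_deriv_ge (H.continuousOn.mono (Icc_subset_Icc hax hzb))
    (fun t ht => ⟨y' t, H.monotone_deriv ⟨hax, hxz.trans hzb⟩
      ⟨hax.trans ht.1.le, ht.2.trans hzb⟩ ht.1.le,
      (H.hasDeriv t ⟨hax.trans ht.1.le, ht.2.trans hzb⟩).Iic_of_Icc (hax.trans_lt ht.1)
        (ht.2.trans hzb)⟩)
    ⟨le_rfl, hxz⟩ ⟨hxz, le_rfl⟩ hxz

lemma increment_le (H : IsGluedScheme N a b c ub h y y') {x z : ℝ} (hax : a ≤ x) (hxz : x ≤ z)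
    (hzb : z ≤ b) : y z - y x ≤ y' z * (z - x) :=
  sub_le_mul_of_left_deriv_le (H.continuousOn.mono (Icc_subset_Icc hax hzb))
    (fun t ht => ⟨y' t, H.monotone_deriv ⟨hax.trans ht.1.le, ht.2.trans hzb⟩
      ⟨hax.trans hxz, hzb⟩ ht.2,
      (H.hasDeriv t ⟨hax.trans ht.1.le, ht.2.trans hzb⟩).Iic_of_Icc (hax.trans_lt ht.1)
        (ht.2.trans hzb)⟩)
    ⟨le_rfl, hxz⟩ ⟨hxz, le_rfl⟩ hxz

lemma monotone (H : IsGluedScheme N a b c ub h y y') (hab : a < b) : MonotoneOn y (Icc a b) := by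
  intro x hx z hz hxz
  have h1 := H.le_increment hx.1 hxz hz.2
  have h2 := mul_nonneg (H.deriv_nonneg hab x hx) (sub_nonneg.2 hxz)
  linarith

lemma mem_Icc (H : IsGluedScheme N a b c ub h y y') (hab : a < b) {x : ℝ} (hx : x ∈ Icc a b) :
    y x ∈ Icc 0 ub := by
  constructor
  · rw [← H.left_val]; exact H.monotone hab ⟨le_rfl, hab.le⟩ hx hx.1
  · rw [← H.right_val]; exact H.monotone hab hx ⟨hab.le, le_rfl⟩ hx.2

/-- The second derivative of the glued function is at most a multiple of the function itself. -/
lemma exists_second_deriv_bound {N : ℝ → ℝ → ℝ} (hN : ContDiff ℝ 2 (Function.uncurry N))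
    {a b c ub : ℝ} (hub : 0 < ub) (hc : c ∈ Ioo a b) :
    ∃ A : ℝ, 0 < A ∧ ∀ (h : ℝ) (y y' : ℝ → ℝ), IsGluedScheme N a b c ub h y y' →
      ∀ x ∈ Ioc a b, ∀ p ∈ Ico a x, ∀ d,
        ((x ≤ c ∧ x - p ≤ h ∧ d = alphaC N p (y' p) (y p) x * y x) ∨
          (c ≤ p ∧ y x - y p ≤ h ∧ d = -betaC N (y p) (1 / y' p) p (y x))) →
        d ≤ A * y x := by
  obtain ⟨K, hK, hKb⟩ := exists_bound_pd hN 0 ub a b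
  have hab : a < b := hc.1.trans hc.2
  have hcb : 0 < b - c := by linarith [hc.2]
  have hab' : 0 < b - a := by linarith
  have hQ : 0 < ub / (b - c) := div_pos hub hcb
  refine ⟨(K * (ub / (b - c)) + K) * (b - a) + K + (K * ub + K + K * (b - a)), by positivity, ?_⟩
  intro h y y' H x hx p hp d hd
  have hpI : p ∈ Icc a b := ⟨hp.1, hp.2.le.trans hx.2⟩
  have hxI : x ∈ Icc a b := Ioc_subset_Icc_self hx
  have hyp := H.mem_Icc hab hpI
  have hyx := H.mem_Icc hab hxI
  have hypx := H.monotone hab hpI hxI hp.2.le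
  obtain ⟨k0, k1, k2⟩ := hKb _ hyp p hpI
  have hp0 := H.deriv_nonneg hab p hpI
  have k0' := (abs_le.1 k0).2
  have k1' := (abs_le.1 k1).2
  have k2' := (abs_le.1 k2).2
  rcases hd with ⟨hxc, -, rfl⟩ | ⟨hcp, -, rfl⟩
  · have hslope : y' p ≤ ub / (b - c) := by
      rw [le_div_iff₀ hcb]
      have h1 := H.le_increment hp.1 hpI.2 le_rfl
      rw [H.right_val] at h1
      have h2 : y' p * (b - c) ≤ y' p * (b - p) :=
        mul_le_mul_of_nonneg_left (by linarith [hp.2]) hp0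
      linarith [hyp.1]
    have h1 : pd1 N (y p) p * y' p + pd2 N (y p) p ≤ K * (ub / (b - c)) + K :=
      add_le_add (mul_le_mul k1' hslope hp0 hK.le) k2'
    have h2 : alphaC N p (y' p) (y p) x ≤ (K * (ub / (b - c)) + K) * (b - a) + K := by
      unfold alphaC
      have h3 : x - p ≤ b - a := by linarith [hx.2, hp.1]
      have h4 : 0 ≤ x - p := by linarith [hp.2]
      have h5 : 0 ≤ K * (ub / (b - c)) + K := by positivity
      have := mul_le_mul h1 h3 h4 h5
      linarith
    have h6 : 0 ≤ K * ub + K + K * (b - a) := by positivity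
    exact mul_le_mul_of_nonneg_right (by linarith) hyx.1
  · have hap : a < p := hc.1.trans_le hcp
    have hpos := H.pos p ⟨hap, hpI.2⟩
    have hsl : y p * (1 / y' p) ≤ b - a := by
      rw [mul_one_div, div_le_iff₀ hpos]
      have h1 := H.increment_le le_rfl hp.1 hpI.2
      rw [H.left_val, sub_zero] at h1
      nlinarith [hpI.2]
    have hsl0 : 0 ≤ y p * (1 / y' p) := mul_nonneg hyp.1 (by positivity)
    unfold betaC
    rw [pd1_Ncal hN, pd2_Ncal, Ncal]
    have e1 : pd1 N (y p) p * y p ≤ K * ub := mul_le_mul k1' hyp.2 hyp.1 hK.le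
    have e2 : pd2 N (y p) p * (y p * (1 / y' p)) ≤ K * (b - a) :=
      mul_le_mul k2' hsl hsl0 hK.le
    have e3 : (pd1 N (y p) p * y p + N (y p) p + pd2 N (y p) p * y p * (1 / y' p)) * (y x - y p)
        ≤ (K * ub + K + K * (b - a)) * (y x - y p) :=
      mul_le_mul_of_nonneg_right (by linarith [mul_assoc (pd2 N (y p) p) (y p) (1 / y' p)])
        (by linarith)
    have e4 : N (y p) p * y p ≤ K * y p := mul_le_mul_of_nonneg_right k0' hyp.1
    have e5 : 0 ≤ (K * (ub / (b - c)) + K) * (b - a) * y x :=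
      mul_nonneg (by positivity) hyx.1
    have e6 : 0 ≤ (K * ub + K + K * (b - a)) * y p := mul_nonneg (by positivity) hyp.1
    have e7 : K * y p ≤ K * y x := mul_le_mul_of_nonneg_left hypx hK.le
    linarith

/-- The slope of the glued function is bounded above and below away from zero, and it is Lipschitz,
uniformly over all meshes. -/
lemma exists_slope_bounds {N : ℝ → ℝ → ℝ} (hN : ContDiff ℝ 2 (Function.uncurry N))
    {a b c ub : ℝ} (hub : 0 < ub) (hc : c ∈ Ioo a b) :
    ∃ δ M Λ : ℝ, 0 < δ ∧ 0 < M ∧ 0 < Λ ∧ ∀ (h : ℝ) (y y' : ℝ → ℝ),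
      IsGluedScheme N a b c ub h y y' →
      (∀ x ∈ Icc a b, δ ≤ y' x ∧ y' x ≤ M) ∧
      ∀ p ∈ Icc a b, ∀ x ∈ Icc a b, p ≤ x → |y' x - y' p| ≤ Λ * (x - p) := by
  obtain ⟨A, hA, hAb⟩ := exists_second_deriv_bound hN hub hc
  have hab : a < b := hc.1.trans hc.2
  have hcb : 0 < b - c := by linarith [hc.2]
  have hab' : 0 < b - a := by linarith
  set E := Real.exp (A * (b - a) * (b - a)) with hE
  have hEpos : 0 < E := Real.exp_pos _
  refine ⟨ub / ((b - a) * E), ub / (b - c) * E, A * ub, by positivity, by positivity,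
    by positivity, ?_⟩
  intro h y y' H
  have hgron : ∀ x ∈ Icc a b, ∀ z ∈ Icc a b, x ≤ z → y' z ≤ y' x * E := by
    intro x hx z hz hxz
    have h1 := le_mul_exp_of_left_deriv_le (L := A * (b - a)) H.cont (fun t ht => by
      obtain ⟨p, hp, d, hd, -, hform⟩ := H.left_deriv t ht
      refine ⟨d, ?_, hd⟩
      have h2 := hAb h y y' H t ht p hp d hform
      have h3 := H.increment_le le_rfl ht.1.le ht.2
      rw [H.left_val, sub_zero] at h3
      have h4 : y' t * (t - a) ≤ y' t * (b - a) :=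
        mul_le_mul_of_nonneg_left (by linarith [ht.2]) (H.pos t ht).le
      have h5 := mul_le_mul_of_nonneg_left (h3.trans h4) hA.le
      linarith) hx hz hxz
    refine h1.trans (mul_le_mul_of_nonneg_left ?_ (H.deriv_nonneg hab x hx))
    exact Real.exp_le_exp.2 (mul_le_mul_of_nonneg_left (by linarith [hx.1, hz.2]) (by positivity))
  have haI : a ∈ Icc a b := ⟨le_rfl, hab.le⟩
  have hbI : b ∈ Icc a b := ⟨hab.le, le_rfl⟩
  have hcI : c ∈ Icc a b := Ioo_subset_Icc_self hc
  refine ⟨fun x hx => ⟨?_, ?_⟩, fun p hp x hx hpx => ?_⟩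
  · refine le_trans ?_ (H.monotone_deriv haI hx hx.1)
    rw [div_le_iff₀ (by positivity)]
    have h1 := H.increment_le le_rfl hab.le le_rfl
    rw [H.left_val, H.right_val, sub_zero] at h1
    have h2 := mul_le_mul_of_nonneg_right (hgron a haI b hbI hab.le) hab'.le
    linarith
  · refine (H.monotone_deriv hx hbI hx.2).trans ((hgron c hcI b hbI hc.2.le).trans ?_)
    refine mul_le_mul_of_nonneg_right ?_ hEpos.le
    rw [le_div_iff₀ hcb]
    have h1 := H.le_increment hc.1.le hc.2.le le_rfl
    rw [H.right_val] at h1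
    linarith [(H.mem_Icc hab hcI).1]
  · rw [abs_of_nonneg (sub_nonneg.2 (H.monotone_deriv hp hx hpx))]
    refine sub_le_mul_of_left_deriv_le H.cont (fun t ht => ?_) hp hx hpx
    obtain ⟨p, hp, d, hd, -, hform⟩ := H.left_deriv t ht
    exact ⟨d, (hAb h y y' H t ht p hp d hform).trans
      (mul_le_mul_of_nonneg_left (H.mem_Icc hab (Ioc_subset_Icc_self ht)).2 hA.le), hd⟩

/-- The glued function solves `y'' = 𝒩(y, x)` up to a defect of order `h²`. -/
lemma exists_defect_bound {N : ℝ → ℝ → ℝ} (hN : ContDiff ℝ 2 (Function.uncurry N))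
    {a b c ub δ M Λ : ℝ} (hub : 0 < ub) (hc : c ∈ Ioo a b)
    (hδ : 0 < δ) (hM : 0 < M) (hΛ : 0 < Λ) :
    ∃ C : ℝ, 0 < C ∧ ∀ (h : ℝ) (y y' : ℝ → ℝ),
      IsGluedScheme N a b c ub h y y' →
      (∀ x ∈ Icc a b, δ ≤ y' x ∧ y' x ≤ M) →
      (∀ p ∈ Icc a b, ∀ x ∈ Icc a b, p ≤ x → |y' x - y' p| ≤ Λ * (x - p)) →
      ∀ x ∈ Ioc a b, ∃ d, HasDerivWithinAt y' d (Iic x) x ∧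
        |d - Function.uncurry (Ncal N) (y x, x)| ≤ C * h ^ 2 := by
  have hab : a < b := hc.1.trans hc.2
  obtain ⟨C₁, hC₁, hT₁⟩ := exists_taylor_bound_along_graph hN a b ub M Λ hM.le hΛ.le
  obtain ⟨C₂, hC₂, hT₂⟩ :=
    exists_taylor_bound_along_graph (contDiff_Ncal hN) a b ub M Λ hM.le hΛ.le
  obtain ⟨K, hK, hKb⟩ := exists_bound_pd (contDiff_Ncal hN) 0 ub a b
  refine ⟨C₁ * ub + (C₂ + (K + K * (1 / δ)) * Λ) * (1 / δ) ^ 2, by positivity, ?_⟩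
  intro h y y' H hy' hyL x hx
  have hxI : x ∈ Icc a b := Ioc_subset_Icc_self hx
  obtain ⟨p, hp, d, hd, -, hform⟩ := H.left_deriv x hx
  refine ⟨d, hd, ?_⟩
  have hpI : p ∈ Icc a b := ⟨hp.1, hp.2.le.trans hx.2⟩
  have hxp : 0 ≤ x - p := by linarith [hp.2]
  have hsub : Icc p x ⊆ Icc a b := Icc_subset_Icc hp.1 hx.2
  have hder : ∀ t ∈ Icc p x, HasDerivWithinAt y (y' t) (Icc p x) t :=
    fun t ht => (H.hasDeriv t (hsub ht)).mono hsub
  have hyb : ∀ t ∈ Icc p x, |y t| ≤ ub := fun t ht => by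
    have := H.mem_Icc hab (hsub ht)
    exact abs_le.2 ⟨by linarith [this.1], this.2⟩
  have hyM : ∀ t ∈ Icc p x, |y' t| ≤ M := fun t ht => by
    have := hy' t (hsub ht)
    exact abs_le.2 ⟨by linarith, this.2⟩
  have hyΛ : ∀ t ∈ Icc p x, |y' t - y' p| ≤ Λ * (t - p) :=
    fun t ht => hyL p hpI t (hsub ht) ht.1
  rcases hform with ⟨-, hstep, rfl⟩ | ⟨-, hstep, rfl⟩
  · have h1 := hT₁ y y' p x hp.1 hp.2.le hx.2 hder hyb hyM hyΛ
    rw [← pd1_eq_fderiv hN, ← pd2_eq_fderiv hN] at h1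
    simp only [Function.uncurry_apply_pair] at h1 ⊢
    have h2 : (x - p) ^ 2 ≤ h ^ 2 := by gcongr
    have e : alphaC N p (y' p) (y p) x * y x - Ncal N (y x) x =
        -(N (y x) x - N (y p) p - (pd1 N (y p) p * y' p + pd2 N (y p) p) * (x - p)) * y x := by
      unfold alphaC Ncal; ring
    rw [e, abs_mul, abs_neg]
    calc _ ≤ C₁ * h ^ 2 * ub := by
          gcongr
          · exact h1.trans (by gcongr)
          · exact hyb x ⟨hp.2.le, le_rfl⟩
      _ ≤ _ := by
          have : 0 ≤ (C₂ + (K + K * (1 / δ)) * Λ) * (1 / δ) ^ 2 * h ^ 2 := by positivity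
          nlinarith
  · have h1 := hT₂ y y' p x hp.1 hp.2.le hx.2 hder hyb hyM hyΛ
    rw [← pd1_eq_fderiv (contDiff_Ncal hN), ← pd2_eq_fderiv (contDiff_Ncal hN)] at h1
    simp only [Function.uncurry_apply_pair] at h1 ⊢
    obtain ⟨-, k1, k2⟩ := hKb _ (H.mem_Icc hab hpI) p hpI
    have hδp := (hy' p hpI).1
    have hpos : 0 < y' p := hδ.trans_le hδp
    have hxh : x - p ≤ 1 / δ * h := by
      have h2 := H.le_increment hp.1 hp.2.le hx.2
      rw [one_div_mul_eq_div, le_div_iff₀ hδ]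
      nlinarith
    have hxh2 : (x - p) ^ 2 ≤ (1 / δ * h) ^ 2 := by gcongr
    have hlin : |y x - y p - y' p * (x - p)| ≤ Λ * (x - p) ^ 2 := by
      have u1 := H.le_increment hp.1 hp.2.le hx.2
      have u2 := H.increment_le hp.1 hp.2.le hx.2
      have u3 := (abs_le.1 (hyΛ x ⟨hp.2.le, le_rfl⟩)).2
      rw [abs_of_nonneg (by linarith)]
      nlinarith
    have hcoef : |pd1 (Ncal N) (y p) p + pd2 (Ncal N) (y p) p * (1 / y' p)|
        ≤ K + K * (1 / δ) := by
      refine (abs_add_le _ _).trans (add_le_add k1 ?_)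
      rw [abs_mul, abs_of_pos (one_div_pos.2 hpos)]
      gcongr
    have e : -betaC N (y p) (1 / y' p) p (y x) - Ncal N (y x) x =
        -(Ncal N (y x) x - Ncal N (y p) p -
          (pd1 (Ncal N) (y p) p * y' p + pd2 (Ncal N) (y p) p) * (x - p)) +
        (pd1 (Ncal N) (y p) p + pd2 (Ncal N) (y p) p * (1 / y' p)) *
          (y x - y p - y' p * (x - p)) := by
      unfold betaC; field_simp; ring
    rw [e]
    calc _ ≤ C₂ * (x - p) ^ 2 + (K + K * (1 / δ)) * (Λ * (x - p) ^ 2) := by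
          refine (abs_add_le _ _).trans (add_le_add (by rwa [abs_neg]) ?_)
          rw [abs_mul]
          gcongr
      _ = (C₂ + (K + K * (1 / δ)) * Λ) * (x - p) ^ 2 := by ring
      _ ≤ (C₂ + (K + K * (1 / δ)) * Λ) * (1 / δ * h) ^ 2 := by gcongr
      _ ≤ _ := by
          have : 0 ≤ C₁ * ub * h ^ 2 := by positivity
          nlinarith

end IsGluedScheme

section Gluing

lemma exists_knot_interval (k : ℕ → ℝ) {n : ℕ} {x : ℝ} (h0 : k 0 < x) (hn : x ≤ k n) :
    ∃ i < n, k i < x ∧ x ≤ k (i + 1) := by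
  induction n with
  | zero => exact absurd hn (not_le.2 h0)
  | succ n ih =>
    rcases le_or_gt x (k n) with h | h
    · obtain ⟨i, hi, hx⟩ := ih h
      exact ⟨i, hi.trans n.lt_succ_self, hx⟩
    · exact ⟨n, n.lt_succ_self, h, hn⟩

lemma Mesh.pt_zero_le (m : Mesh) {i : ℕ} (hi : i ≤ m.n) : m.pt 0 ≤ m.pt i := by
  induction i with
  | zero => exact le_rfl
  | succ i ih => exact (ih (Nat.le_of_succ_le hi)).trans (m.mono i hi).le

/-- Functions differentiable on two adjacent intervals, with matching derivatives at the common
endpoint, glue to a differentiable function. -/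
lemma HasDerivWithinAt.glue_Icc {y y' : ℝ → ℝ} {a b c : ℝ} (hac : a ≤ c) (hcb : c ≤ b)
    (h₁ : ∀ x ∈ Icc a c, HasDerivWithinAt y (y' x) (Icc a c) x)
    (h₂ : ∀ x ∈ Icc c b, HasDerivWithinAt y (y' x) (Icc c b) x) :
    ∀ x ∈ Icc a b, HasDerivWithinAt y (y' x) (Icc a b) x := by
  intro x hx
  rw [← Icc_union_Icc_eq_Icc hac hcb]
  refine HasDerivWithinAt.union ?_ ?_
  · by_cases h : x ∈ Icc a c
    · exact h₁ x h
    · exact hasDerivWithinAt_iff_hasFDerivWithinAt.2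
        (.of_notMem_closure (by rwa [isClosed_Icc.closure_eq]))
  · by_cases h : x ∈ Icc c b
    · exact h₂ x h
    · exact hasDerivWithinAt_iff_hasFDerivWithinAt.2
        (.of_notMem_closure (by rwa [isClosed_Icc.closure_eq]))

/-- A scheme pair satisfying the sign inequalities glues to a function on `[a, b]`. -/
lemma GoodPair.exists_glued {N : ℝ → ℝ → ℝ} {a b c ub h : ℝ} (hc : c ∈ Ioo a b)
    {ms mi : Mesh} (hms0 : ms.pt 0 = a) (hmsn : ms.pt ms.n = c) (hmi0 : mi.pt 0 = 0)
    (hmin : mi.pt mi.n = ub) {u u' X X' : ℝ → ℝ} (hG : GoodPair N a b c ub ms mi u u' X X')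
    (hstep : StepLe ms mi (u c) h) :
    ∃ y y' : ℝ → ℝ, IsGluedScheme N a b c ub h y y' ∧
      (∀ x ∈ Icc a c, y x = u x ∧ y' x = u' x) ∧
      ∀ v ∈ Icc (u c) ub, X v ∈ Icc a b ∧ y (X v) = v ∧ y' (X v) = (X' v)⁻¹ := by
  obtain ⟨⟨⟨hu, hu'c, hu''⟩, hua, hs0, hsub, hu'ne, ⟨hX, hX'c, hX''⟩, hXb, hXs, hX's⟩,
    hupos, hconv, hXpos, hconc⟩ := hG
  obtain ⟨hac, hcb⟩ := hc
  have hcI : c ∈ Ioc a c := ⟨hac, le_rfl⟩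
  have hu'pos : 0 < u' c := (hupos c hcI).2.2
  have hX'pos : ∀ v ∈ Icc (u c) ub, 0 < X' v := by
    intro v hv
    rcases hv.1.eq_or_lt with h | h
    · rw [← h, hX's]; positivity
    · exact (hXpos v ⟨h, hv.2⟩).2
  obtain ⟨v₀, hv₀, hmin₀⟩ := isCompact_Icc.exists_isMinOn (nonempty_Icc.2 hsub.le) hX'c
  obtain ⟨hXmono, Y, hYX, hY, hYmono, hYd⟩ := exists_hasDerivWithinAt_inverse hsub.le
    (hX'pos v₀ hv₀) hX (fun v hv => hmin₀ hv)
  rw [hXs, hXb] at hY hYmono hYd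
  have hsI : u c ∈ Icc (u c) ub := ⟨le_rfl, hsub.le⟩
  have hubI : ub ∈ Icc (u c) ub := ⟨hsub.le, le_rfl⟩
  have hXmem : ∀ v ∈ Icc (u c) ub, X v ∈ Icc c b := fun v hv =>
    ⟨hXs ▸ hXmono.monotoneOn hsI hv hv.1, hXb ▸ hXmono.monotoneOn hv hubI hv.2⟩
  have hYc : Y c = u c := by
    have := hYX _ hsI
    rwa [hXs] at this
  set y : ℝ → ℝ := fun x => if x ≤ c then u x else Y x with hy
  set y' : ℝ → ℝ := fun x => if x ≤ c then u' x else (X' (Y x))⁻¹ with hy'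
  have yl : ∀ x ≤ c, y x = u x := fun x hx => if_pos hx
  have yl' : ∀ x ≤ c, y' x = u' x := fun x hx => if_pos hx
  have yr : ∀ x, c ≤ x → y x = Y x := by
    intro x hx
    rcases hx.eq_or_lt with rfl | hx
    · rw [yl _ le_rfl, hYc]
    · exact if_neg (not_le.2 hx)
  have yr' : ∀ x, c ≤ x → y' x = (X' (Y x))⁻¹ := by
    intro x hx
    rcases hx.eq_or_lt with rfl | hx
    · rw [yl' _ le_rfl, hYc, hX's]; simp
    · exact if_neg (not_le.2 hx)
  have hYcont : ContinuousOn Y (Icc c b) := fun x hx => (hYd x hx).continuousWithinAt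
  refine ⟨y, y', ⟨?_, ?_, ?_, ?_, ?_, ?_⟩, fun x hx => ⟨yl x hx.2, yl' x hx.2⟩, fun v hv => ?_⟩
  · refine HasDerivWithinAt.glue_Icc hac.le hcb.le (fun x hx => ?_) (fun x hx => ?_)
    · rw [yl' x hx.2]
      exact (hu x hx).congr (fun z hz => yl z hz.2) (yl x hx.2)
    · rw [yr' x hx.1]
      exact (hYd x hx).congr (fun z hz => yr z hz.1) (yr x hx.1)
  · rw [← Icc_union_Icc_eq_Icc hac.le hcb.le]
    refine ContinuousOn.union_of_isClosed ?_ ?_ isClosed_Icc isClosed_Icc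
    · exact hu'c.congr fun x hx => yl' x hx.2
    · refine ContinuousOn.congr ?_ fun x hx => yr' x hx.1
      exact (hX'c.comp hYcont fun x hx => (hY x hx).1).inv₀
        fun x hx => (hX'pos _ (hY x hx).1).ne'
  · rw [yl a hac.le, hua]
  · rw [yr b hcb.le, ← hXb, hYX ub hubI]
  · intro x hx
    rcases le_or_gt x c with hxc | hxc
    · rw [yl' x hxc]; exact (hupos x ⟨hx.1, hxc⟩).2.2
    · rw [yr' x hxc.le]; exact inv_pos.2 (hX'pos _ (hY x ⟨hxc.le, hx.2⟩).1)
  · intro x hx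
    rcases le_or_gt x c with hxc | hxc
    · obtain ⟨i, hi, hix, hxi⟩ := exists_knot_interval ms.pt (hms0 ▸ hx.1) (hmsn ▸ hxc)
      have hpa : a ≤ ms.pt i := hms0 ▸ ms.pt_zero_le hi.le
      have hpc : ms.pt i ≤ c := hix.le.trans hxc
      refine ⟨ms.pt i, ⟨hpa, hix⟩, _, ?_, hconv i hi x ⟨hix.le, hxi⟩ ⟨hx.1, hxc⟩, Or.inl
        ⟨hxc, (sub_le_sub_right hxi _).trans (hstep.1 i hi), ?_⟩⟩
      · exact ((hu'' i hi x ⟨hix.le, hxi⟩).Iic_of_Icc hix hxi).congr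
          (fun z hz => yl' z (le_trans hz hxc)) (yl' x hxc)
      · rw [yl' _ hpc, yl _ hpc, yl x hxc]
    · have hxI : x ∈ Icc c b := ⟨hxc.le, hx.2⟩
      obtain ⟨hvI, hXv⟩ := hY x hxI
      set v := Y x with hv
      have hsv : u c < v := hvI.1.lt_of_ne fun h => by
        rw [← h, hXs] at hXv
        exact hxc.ne hXv
      have hk0 : ubar mi (u c) 0 = u c := by rw [ubar, hmi0, max_eq_right hs0.le]
      have hkn : ubar mi (u c) mi.n = ub := by rw [ubar, hmin, max_eq_left hsub.le]
      obtain ⟨i, hi, hiv, hvi⟩ := exists_knot_interval (ubar mi (u c)) (hk0.trans_lt hsv)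
        (hvI.2.trans_eq hkn.symm)
      set k := ubar mi (u c) i with hk
      have hkI : k ∈ Icc (u c) ub := ⟨le_max_right _ _, hiv.le.trans hvI.2⟩
      have hpx : X k < x := hXv ▸ hXmono hkI hvI hiv
      have hpI := hXmem k hkI
      have hYk : Y (X k) = k := hYX k hkI
      have hvpos := hX'pos v hvI
      have hsub' : Icc (X k) x ⊆ Icc c b := Icc_subset_Icc hpI.1 hx.2
      have hval : -(betaC N k (X' k) (X k) v * X' v ^ 3 * (X' v)⁻¹) / X' v ^ 2
          = -betaC N k (X' k) (X k) v := by
        field_simp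
      have hder : HasDerivWithinAt y' (-betaC N k (X' k) (X k) v) (Icc (X k) x) x := by
        have h1 := (hX'' i hi v ⟨hiv.le, hvi⟩).comp x ((hYd x hxI).mono hsub')
          (fun z hz => ⟨hYk.symm.le.trans (hYmono hpI (hsub' hz) hz.1),
            (hYmono (hsub' hz) hxI hz.2).trans hvi⟩)
        have h2 := h1.inv (by simpa using hvpos.ne')
        rw [← hval]
        exact h2.congr (fun z hz => yr' z (hpI.1.trans hz.1)) (yr' x hxc.le)
      refine ⟨X k, ⟨hac.le.trans hpI.1, hpx⟩, _, hder.Iic_of_Icc hpx le_rfl, ?_, Or.inr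
        ⟨hpI.1, ?_, ?_⟩⟩
      · have h1 := hconc i hi v ⟨hiv.le, hvi⟩ ⟨hsv, hvI.2⟩
        exact neg_nonneg.2 (nonpos_of_mul_nonpos_left h1 (by positivity))
      · rw [yr _ hpI.1, yr x hxc.le, hYk]
        exact (sub_le_sub_right hvi _).trans (hstep.2 i hi)
      · rw [yr _ hpI.1, yr' _ hpI.1, yr x hxc.le, hYk, one_div, inv_inv]
  · have hm := hXmem v hv
    exact ⟨⟨hac.le.trans hm.1, hm.2⟩, by rw [yr _ hm.1, hYX v hv], by rw [yr' _ hm.1, hYX v hv]⟩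

end Gluing

/-- under hypothesis (H) there are constants `κ₃, κ₄, h₀ > 0` (depending
only on the data of the problem) such that for all meshes of maximal step size `h ≤ h₀`
and every scheme pair `(ũ, x̃)` satisfying the sign inequalities, there is an exact
solution `ǔ` of the straight equation on `[a,b]` with `ǔ(b) = u_b`, `ǔ'(b) = 1/x̃'(u_b)`,
strictly increasing with image covering `[ũ(c), u_b]`, which approximates `ũ` within
`κ₃h²` in the C¹-norm on `[a,c]`, while its inverse `x̌` approximates `x̃` within
`κ₄h²` in the C¹-norm on `[ũ(c), u_b]`. -/
theorem scheme_approximates_shooting_straight_solution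
    (a b c ub : ℝ) (hab : a < b) (hub : 0 < ub) (hc : c ∈ Ioo a b)
    (N : ℝ → ℝ → ℝ) (hN : ContDiff ℝ 2 (Function.uncurry N))
    (hH : HypH N a b) :
    ∃ κ₃ κ₄ h₀ : ℝ, 0 < κ₃ ∧ 0 < κ₄ ∧ 0 < h₀ ∧
      ∀ ms mi : Mesh,
        ms.pt 0 = a → ms.pt ms.n = c → mi.pt 0 = 0 → mi.pt mi.n = ub →
        ∀ u u' X X' : ℝ → ℝ, GoodPair N a b c ub ms mi u u' X X' →
        ∀ h : ℝ, h ≤ h₀ → StepLe ms mi (u c) h →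
        ∃ uc uc' uc'' : ℝ → ℝ,
          IsC2On uc uc' uc'' (Icc a b) ∧
          (∀ x ∈ Icc a b, uc'' x = Ncal N (uc x) x) ∧
          uc b = ub ∧ uc' b = 1 / X' ub ∧
          StrictMonoOn uc (Icc a b) ∧
          Icc (u c) ub ⊆ uc '' Icc a b ∧
          ∃ xc xc' : ℝ → ℝ,
            (∀ x ∈ Icc a b, xc (uc x) = x) ∧
            (∀ v ∈ Icc (u c) ub, HasDerivWithinAt xc (xc' v) (Icc (u c) ub) v) ∧
            (∀ x ∈ Icc a c,
              |u x - uc x| ≤ κ₃ * h ^ 2 ∧ |u' x - uc' x| ≤ κ₃ * h ^ 2) ∧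
            (∀ v ∈ Icc (u c) ub,
              |X v - xc v| ≤ κ₄ * h ^ 2 ∧ |X' v - xc' v| ≤ κ₄ * h ^ 2) := by
  have hac : 0 < c - a := by linarith [hc.1]
  obtain ⟨δ, M, Λ, hδ, hM, hΛ, hslope⟩ := IsGluedScheme.exists_slope_bounds hN hub hc
  obtain ⟨Cd, hCd, hdefect⟩ := IsGluedScheme.exists_defect_bound hN hub hc hδ hM hΛ
  obtain ⟨Cs, hCs, hexact⟩ := exists_exact_solution_near (contDiff_Ncal hN) (R := ub + M) hab
    (by positivity)
  set k := Cs * Cd with hk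
  have hkpos : 0 < k := by positivity
  set θ := min 1 (min (δ / 2) (δ * (c - a))) with hθ
  have hθpos : 0 < θ := by positivity
  refine ⟨k, k * (2 / δ + 2 / δ ^ 2 * (1 + 2 * Λ / δ)), min 1 (θ / k), hkpos, by positivity,
    by positivity, ?_⟩
  intro ms mi hms0 hmsn hmi0 hmin u u' X X' hG h hh hstep
  have hhpos : 0 < h :=
    (sub_pos.2 (ms.mono 0 ms.npos)).trans_le (hstep.1 0 ms.npos)
  have hkθ : k * h ^ 2 ≤ θ := by
    have h1 : h ≤ 1 := hh.trans (min_le_left _ _)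
    have h2 : h * k ≤ θ := (le_div_iff₀ hkpos).1 (hh.trans (min_le_right _ _))
    nlinarith
  have hk1 : k * h ^ 2 ≤ 1 := hkθ.trans (min_le_left _ _)
  have hk2 : k * h ^ 2 ≤ δ / 2 := hkθ.trans ((min_le_right _ _).trans (min_le_left _ _))
  have hk3 : k * h ^ 2 ≤ δ * (c - a) := hkθ.trans ((min_le_right _ _).trans (min_le_right _ _))
  obtain ⟨y, y', H, hyu, hyX⟩ := hG.exists_glued hc hms0 hmsn hmi0 hmin hstep
  obtain ⟨hy', hyL⟩ := hslope h y y' H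
  have haI : a ∈ Icc a b := ⟨le_rfl, hab.le⟩
  have hsub : u c < ub := hG.1.2.2.2.1
  have hXub : X ub = b := hG.1.2.2.2.2.2.2.1
  have hCk : Cs * (Cd * h ^ 2) = k * h ^ 2 := by rw [hk]; ring
  obtain ⟨w, w', hwb, hwb', hw⟩ := hexact y y' (Cd * h ^ 2) (by positivity) H.hasDeriv H.cont
    (fun x hx => by
      have h1 := H.mem_Icc hab hx
      have h2 := hy' x hx
      exact ⟨abs_le.2 ⟨by linarith [h1.1], by linarith [h1.2]⟩,
        abs_le.2 ⟨by linarith, by linarith⟩⟩)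
    (hdefect h y y' H hy' hyL) (by rwa [hCk])
  rw [hCk] at hw
  have hwd : ∀ x ∈ Icc a b, HasDerivWithinAt w (w' x) (Icc a b) x := fun x hx => (hw x hx).1
  have hwlow : ∀ x ∈ Icc a b, δ / 2 ≤ w' x := fun x hx => by
    have h1 := (abs_le.1 (hw x hx).2.2.2).2
    linarith [(hy' x hx).1]
  have hwc : ContinuousOn w (Icc a b) := fun x hx => (hwd x hx).continuousWithinAt
  obtain ⟨hwmono, g, hgw, hg, -, hgd⟩ :=
    exists_hasDerivWithinAt_inverse hab.le (half_pos hδ) hwd hwlow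
  have hwinc : ∀ x ∈ Icc a b, ∀ z ∈ Icc a b, δ / 2 * |z - x| ≤ |w z - w x| := by
    have key : ∀ x ∈ Icc a b, ∀ z ∈ Icc a b, x ≤ z → δ / 2 * (z - x) ≤ w z - w x :=
      fun x hx z hz => mul_sub_le_of_left_deriv_ge hwc (fun t ht =>
        ⟨w' t, hwlow t (Ioc_subset_Icc_self ht),
          (hwd t (Ioc_subset_Icc_self ht)).Iic_of_Icc ht.1 ht.2⟩) hx hz
    intro x hx z hz
    rcases le_total x z with hxz | hxz
    · rw [abs_of_nonneg (sub_nonneg.2 hxz)]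
      exact (key x hx z hz hxz).trans (le_abs_self _)
    · rw [abs_sub_comm, abs_sub_comm (w z), abs_of_nonneg (sub_nonneg.2 hxz)]
      exact (key z hz x hx hxz).trans (le_abs_self _)
  have hwb_ub : w b = ub := hwb.trans H.right_val
  have hwa : w a ≤ u c := by
    have h1 := (abs_le.1 (hw a haI).2.2.1).1
    rw [H.left_val] at h1
    have h2 := H.le_increment le_rfl hc.1.le hc.2.le
    rw [H.left_val, (hyu c ⟨hc.1.le, le_rfl⟩).1] at h2
    have h3 := mul_le_mul_of_nonneg_right (hy' a haI).1 hac.le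
    linarith
  have hrange : Icc (u c) ub ⊆ Icc (w a) (w b) := Icc_subset_Icc hwa hwb_ub.ge
  refine ⟨w, w', fun x => Ncal N (w x) x, ⟨hwd, fun x hx => (hw x hx).2.1, ?_⟩, fun _ _ => rfl,
    hwb_ub, ?_, hwmono, fun v hv => ⟨g v, hg v (hrange hv)⟩, g, fun v => (w' (g v))⁻¹, hgw,
    fun v hv => (hgd v (hrange hv)).mono hrange, fun x hx => ?_, fun v hv => ?_⟩
  · exact (contDiff_Ncal hN).continuous.comp_continuousOn (hwc.prodMk continuousOn_id)
  · rw [hwb', ← hXub, (hyX ub ⟨hsub.le, le_rfl⟩).2.2, one_div]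
  · have hxI : x ∈ Icc a b := ⟨hx.1, hx.2.trans hc.2.le⟩
    rw [← (hyu x hx).1, ← (hyu x hx).2]
    exact (hw x hxI).2.2
  · obtain ⟨hxI, hyx, hyx'⟩ := hyX v hv
    obtain ⟨hgI, hwg⟩ := hg v (hrange hv)
    have hdist : |X v - g v| ≤ 2 / δ * (k * h ^ 2) := by
      have h1 := hwinc _ hgI _ hxI
      have h2 := (hw _ hxI).2.2.1
      rw [hyx] at h2
      rw [hwg, abs_sub_comm (w (X v))] at h1
      rw [div_mul_eq_mul_div, le_div_iff₀ hδ]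
      linarith
    have hyLip : |y' (g v) - y' (X v)| ≤ Λ * |X v - g v| := by
      rcases le_total (g v) (X v) with hle | hle
      · rw [abs_sub_comm, abs_of_nonneg (sub_nonneg.2 hle)]
        exact hyL _ hgI _ hxI hle
      · rw [abs_sub_comm (X v), abs_of_nonneg (sub_nonneg.2 hle)]
        exact hyL _ hxI _ hgI hle
    have hkh : 0 ≤ k * h ^ 2 := by positivity
    have hslopes : |w' (g v) - y' (X v)| ≤ (1 + 2 * Λ / δ) * (k * h ^ 2) := by
      have h1 := (hw _ hgI).2.2.2
      rw [abs_sub_comm] at h1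
      calc _ ≤ |w' (g v) - y' (g v)| + |y' (g v) - y' (X v)| := abs_sub_le _ _ _
        _ ≤ k * h ^ 2 + Λ * (2 / δ * (k * h ^ 2)) :=
          add_le_add h1 (hyLip.trans (mul_le_mul_of_nonneg_left hdist hΛ.le))
        _ = _ := by ring
    have hyδ := (hy' _ hxI).1
    have hwδ := hwlow _ hgI
    have hypos : 0 < y' (X v) := hδ.trans_le hyδ
    have hwpos : 0 < w' (g v) := (half_pos hδ).trans_le hwδ
    have hderiv : |X' v - (w' (g v))⁻¹| ≤ 2 / δ ^ 2 * ((1 + 2 * Λ / δ) * (k * h ^ 2)) := by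
      have e : X' v - (w' (g v))⁻¹ = 1 / (y' (X v) * w' (g v)) * (w' (g v) - y' (X v)) := by
        have : X' v = (y' (X v))⁻¹ := by rw [hyx', inv_inv]
        rw [this]
        field_simp
      have hprod : δ ^ 2 / 2 ≤ y' (X v) * w' (g v) := by nlinarith
      have hinv : 1 / (y' (X v) * w' (g v)) ≤ 2 / δ ^ 2 := by
        calc _ ≤ 1 / (δ ^ 2 / 2) := one_div_le_one_div_of_le (by positivity) hprod
          _ = _ := by field_simp
      rw [e, abs_mul, abs_of_pos (by positivity : 0 < 1 / (y' (X v) * w' (g v)))]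
      exact mul_le_mul hinv hslopes (abs_nonneg _) (by positivity)
    have hA : 0 ≤ 2 / δ * (k * h ^ 2) := by positivity
    have hB : 0 ≤ 2 / δ ^ 2 * ((1 + 2 * Λ / δ) * (k * h ^ 2)) := by positivity
    have hsum : k * (2 / δ + 2 / δ ^ 2 * (1 + 2 * Λ / δ)) * h ^ 2 =
        2 / δ * (k * h ^ 2) + 2 / δ ^ 2 * ((1 + 2 * Λ / δ) * (k * h ^ 2)) := by ring
    rw [hsum]
    exact ⟨by linarith, by linarith⟩
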